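/- Let (Ȳ_t)_{t∈[0,T]} be a mean-continuous family of Ê-integrable random variables with l_T ≤ Ê[ħ(T, Ȳ_T)] ≤ u_T, and let (Y, R) = BSP̂_l^u(Ȳ, ħ). Then for every t ∈ [0,T]: |R_T − R_t| ≤ (1 + 2c̄/c̲) sup_{s∈[t,T]} Ê[|Ȳ_s|] + sup_{s∈[t,T]} max( |L_s(0)|, |U_s(0)| ), where L_s(0), U_s(0) are the values of the operators L, U at the zero random variable. -/

import Mathlib

open MeasureTheory Set Filter

/-- The sublinear expectation `Ê[X] = sup_{P ∈ Ps} ∫ X dP`. -/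
noncomputable def sublinE {Ω : Type*} [MeasurableSpace Ω] (Ps : Set (Measure Ω)) (X : Ω → ℝ) : ℝ :=
  sSup ((fun P => ∫ ω, X ω ∂P) '' Ps)

/-- `X` is Ê-integrable: measurable, integrable w.r.t. each `P ∈ Ps`, and
`sup_{P ∈ Ps} ∫ |X| dP < ∞`. -/
def EIntegrable {Ω : Type*} [MeasurableSpace Ω] (Ps : Set (Measure Ω)) (X : Ω → ℝ) : Prop :=
  Measurable X ∧ (∀ P ∈ Ps, Integrable X P) ∧ ∃ M : ℝ, ∀ P ∈ Ps, (∫ ω, |X ω| ∂P) ≤ M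

/-- Assumption (H_r) on the barriers `l, u` and the running loss function `hb`,
with constants `0 < cl ≤ cu` and `Ch > 0`. -/
def HrAssumption {Ω : Type*} [MeasurableSpace Ω] (T cl cu Ch : ℝ)
    (l u : ℝ → ℝ) (hb : ℝ → Ω → ℝ → ℝ) : Prop :=
  0 < cl ∧ cl ≤ cu ∧ 0 < Ch ∧
  ContinuousOn l (Icc 0 T) ∧ ContinuousOn u (Icc 0 T) ∧
  (∃ M : ℝ, ∀ t ∈ Icc (0:ℝ) T, |l t| ≤ M ∧ |u t| ≤ M) ∧
  (∃ ε > 0, ∀ t ∈ Icc (0:ℝ) T, ε ≤ u t - l t) ∧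
  (∀ t y, Measurable fun ω => hb t ω y) ∧
  (∀ ε > 0, ∃ δ > 0, ∀ (ω : Ω) (t t' y y' : ℝ),
      |t - t'| + |y - y'| < δ → |hb t ω y - hb t' ω y'| < ε) ∧
  (∀ t ω, StrictMono (hb t ω)) ∧
  (∀ t ω y, |hb t ω y| ≤ Ch * (1 + |y|)) ∧
  (∀ t ω y y', cl * |y - y'| ≤ |hb t ω y - hb t ω y'| ∧
    |hb t ω y - hb t ω y'| ≤ cu * |y - y'|)

/-- `H̄(t, x, X) = Ê[hb(t, x + X − Ê[X])]`. -/
noncomputable def Hbar {Ω : Type*} [MeasurableSpace Ω] (Ps : Set (Measure Ω))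
    (hb : ℝ → Ω → ℝ → ℝ) (t x : ℝ) (X : Ω → ℝ) : ℝ :=
  sublinE Ps (fun ω => hb t ω (x + X ω - sublinE Ps X))

/-- A family `(S_t)_{t ∈ [0,T]}` of Ê-integrable random variables which is continuous in mean. -/
def MeanContinuous {Ω : Type*} [MeasurableSpace Ω] (Ps : Set (Measure Ω)) (T : ℝ)
    (S : ℝ → Ω → ℝ) : Prop :=
  (∀ t ∈ Icc (0:ℝ) T, EIntegrable Ps (S t)) ∧
  ∀ t ∈ Icc (0:ℝ) T,
    Tendsto (fun s => sublinE Ps fun ω => |S s ω - S t ω|) (nhdsWithin t (Icc 0 T)) (nhds 0)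

/-- The minimality (Skorokhod) condition in its equivalent increment form: `R` may only
increase on intervals where `φ` stays strictly below `u` and may only decrease on intervals
where `φ` stays strictly above `l`. -/
def MinimalityIncr (T : ℝ) (φ l u R : ℝ → ℝ) : Prop :=
  ∀ s t : ℝ, 0 ≤ s → s < t → t ≤ T →
    ((∀ v, s < v → v ≤ t → φ v < u v) → R s ≤ R t) ∧
    ((∀ v, s < v → v ≤ t → l v < φ v) → R t ≤ R s)

/-- `(Y, R)` solves the backward Skorokhod problem with sublinear expectation for the data
`(Ybar, hb, l, u)`. -/
def IsBSPsol {Ω : Type*} [MeasurableSpace Ω] (Ps : Set (Measure Ω)) (T : ℝ)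
    (hb : ℝ → Ω → ℝ → ℝ) (l u : ℝ → ℝ) (Ybar Y : ℝ → Ω → ℝ) (R : ℝ → ℝ) : Prop :=
  (∀ t ∈ Icc (0:ℝ) T, ∀ ω, Y t ω = Ybar t ω + R T - R t) ∧
  (∀ t ∈ Icc (0:ℝ) T, l t ≤ sublinE Ps (fun ω => hb t ω (Y t ω)) ∧
    sublinE Ps (fun ω => hb t ω (Y t ω)) ≤ u t) ∧
  ContinuousOn R (Icc 0 T) ∧ BoundedVariationOn R (Icc 0 T) ∧ R 0 = 0 ∧
  MinimalityIncr T (fun v => sublinE Ps (fun ω => hb v ω (Y v ω))) l u R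

/-!
The estimate is local in time. At time `t` one has `Y_t = Ȳ_t + a` with `a = R_T - R_t`, so passing
from `Ê[ħ(t, Y_t)]` to `Ê[ħ(t, a)]` costs at most `c̄ Ê|Ȳ_t|`. The map `x ↦ Ê[ħ(t, x)]` has slope at
least `c̲` and takes the values `l_t` and `u_t` at `L_t(0)` and `U_t(0)`; hence `a` overshoots the
interval `[L_t(0), U_t(0)]` by at most `(c̄ / c̲) Ê|Ȳ_t|`.
-/

section Sublinear

variable {Ω : Type*} [MeasurableSpace Ω] {Ps : Set (Measure Ω)} {X Y : Ω → ℝ}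

namespace EIntegrable

theorem mono (hY : EIntegrable Ps Y) (hX : Measurable X) (h : ∀ ω, |X ω| ≤ Y ω) :
    EIntegrable Ps X := by
  obtain ⟨-, hint, M, hM⟩ := hY
  have hXint : ∀ P ∈ Ps, Integrable X P := fun P hP =>
    (hint P hP).mono' hX.aestronglyMeasurable (ae_of_all P h)
  refine ⟨hX, hXint, M, fun P hP => ?_⟩
  calc ∫ ω, |X ω| ∂P ≤ ∫ ω, |Y ω| ∂P :=
        integral_mono (hXint P hP).abs (hint P hP).abs fun ω => (h ω).trans (le_abs_self _)
    _ ≤ M := hM P hP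

theorem const (hprob : ∀ P ∈ Ps, IsProbabilityMeasure P) (c : ℝ) :
    EIntegrable Ps fun _ => c := by
  refine ⟨measurable_const, fun P hP => ?_, |c|, fun P hP => ?_⟩ <;> have := hprob P hP
  · exact integrable_const c
  · simp only [integral_const, probReal_univ, one_smul, le_refl]

theorem abs (hX : EIntegrable Ps X) : EIntegrable Ps fun ω => |X ω| := by
  obtain ⟨hmeas, hint, M, hM⟩ := hX
  exact ⟨hmeas.abs, fun P hP => (hint P hP).abs, M, by simpa only [abs_abs] using hM⟩

theorem add (hX : EIntegrable Ps X) (hY : EIntegrable Ps Y) :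
    EIntegrable Ps fun ω => X ω + Y ω := by
  obtain ⟨hXmeas, hXint, M, hM⟩ := hX
  obtain ⟨hYmeas, hYint, N, hN⟩ := hY
  refine ⟨hXmeas.add hYmeas, fun P hP => (hXint P hP).add (hYint P hP), M + N, fun P hP => ?_⟩
  have hXP := hXint P hP
  have hYP := hYint P hP
  calc ∫ ω, |X ω + Y ω| ∂P ≤ ∫ ω, (|X ω| + |Y ω|) ∂P :=
        integral_mono (hXP.add hYP).abs (hXP.abs.add hYP.abs) fun ω => abs_add_le _ _
    _ = ∫ ω, |X ω| ∂P + ∫ ω, |Y ω| ∂P := integral_add hXP.abs hYP.abs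
    _ ≤ M + N := add_le_add (hM P hP) (hN P hP)

theorem const_mul (hX : EIntegrable Ps X) (c : ℝ) : EIntegrable Ps fun ω => c * X ω := by
  obtain ⟨hmeas, hint, M, hM⟩ := hX
  refine ⟨hmeas.const_mul c, fun P hP => (hint P hP).const_mul c, |c| * M, fun P hP => ?_⟩
  simp only [abs_mul, integral_const_mul]
  exact mul_le_mul_of_nonneg_left (hM P hP) (abs_nonneg c)

theorem sub (hX : EIntegrable Ps X) (hY : EIntegrable Ps Y) :
    EIntegrable Ps fun ω => X ω - Y ω := by
  simpa only [neg_one_mul, ← sub_eq_add_neg] using hX.add (hY.const_mul (-1))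

theorem bddAbove_image_integral (hX : EIntegrable Ps X) :
    BddAbove ((fun P => ∫ ω, X ω ∂P) '' Ps) := by
  obtain ⟨-, -, M, hM⟩ := hX
  refine ⟨M, forall_mem_image.2 fun P hP => ?_⟩
  exact (le_abs_self _).trans (abs_integral_le_integral_abs.trans (hM P hP))

theorem integral_le_sublinE (hX : EIntegrable Ps X) {P : Measure Ω} (hP : P ∈ Ps) :
    ∫ ω, X ω ∂P ≤ sublinE Ps X :=
  le_csSup hX.bddAbove_image_integral (mem_image_of_mem _ hP)

end EIntegrable

theorem sublinE_const (hPs : Ps.Nonempty) (hprob : ∀ P ∈ Ps, IsProbabilityMeasure P) (c : ℝ) :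
    sublinE Ps (fun _ => c) = c := by
  have himage : (fun P : Measure Ω => ∫ _, c ∂P) '' Ps = (fun _ => c) '' Ps :=
    image_congr fun P hP => by
      have := hprob P hP
      simp only [integral_const, probReal_univ, one_smul]
  rw [sublinE, himage, hPs.image_const, csSup_singleton]

theorem sublinE_nonneg (h : ∀ ω, 0 ≤ X ω) : 0 ≤ sublinE Ps X :=
  Real.sSup_nonneg (forall_mem_image.2 fun _ _ => integral_nonneg h)

theorem sublinE_const_mul {c : ℝ} (hc : 0 ≤ c) (X : Ω → ℝ) :
    sublinE Ps (fun ω => c * X ω) = c * sublinE Ps X := by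
  simp only [sublinE, integral_const_mul]
  rw [← smul_eq_mul c (sSup _), ← Real.sSup_smul_of_nonneg hc, ← image_smul, image_image]
  simp only [smul_eq_mul]

theorem sublinE_mono (hPs : Ps.Nonempty) (hX : EIntegrable Ps X) (hY : EIntegrable Ps Y)
    (h : ∀ ω, X ω ≤ Y ω) : sublinE Ps X ≤ sublinE Ps Y :=
  csSup_le (hPs.image _) <| forall_mem_image.2 fun P hP =>
    (integral_mono (hX.2.1 P hP) (hY.2.1 P hP) h).trans (hY.integral_le_sublinE hP)

theorem sublinE_add_le (hPs : Ps.Nonempty) (hX : EIntegrable Ps X) (hY : EIntegrable Ps Y) :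
    sublinE Ps (fun ω => X ω + Y ω) ≤ sublinE Ps X + sublinE Ps Y := by
  refine csSup_le (hPs.image _) (forall_mem_image.2 fun P hP => ?_)
  rw [integral_add (hX.2.1 P hP) (hY.2.1 P hP)]
  exact add_le_add (hX.integral_le_sublinE hP) (hY.integral_le_sublinE hP)

theorem sublinE_add_const (hPs : Ps.Nonempty) (hprob : ∀ P ∈ Ps, IsProbabilityMeasure P)
    (hX : EIntegrable Ps X) (c : ℝ) :
    sublinE Ps (fun ω => X ω + c) = sublinE Ps X + c := by
  have himage : (fun P => ∫ ω, X ω + c ∂P) '' Ps = (fun P => ∫ ω, X ω ∂P + c) '' Ps :=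
    image_congr fun P hP => by
      have := hprob P hP
      rw [integral_add (hX.2.1 P hP) (integrable_const c), integral_const, probReal_univ, one_smul]
  have hshift := (OrderIso.addRight c).map_csSup' (hPs.image _) hX.bddAbove_image_integral
  simpa only [sublinE, himage, image_image, OrderIso.addRight_apply] using hshift.symm

theorem abs_sublinE_sub_sublinE_le (hPs : Ps.Nonempty) (hX : EIntegrable Ps X)
    (hY : EIntegrable Ps Y) :
    |sublinE Ps X - sublinE Ps Y| ≤ sublinE Ps fun ω => |X ω - Y ω| := by
  have one_sided : ∀ {V W : Ω → ℝ}, EIntegrable Ps V → EIntegrable Ps W →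
      sublinE Ps V - sublinE Ps W ≤ sublinE Ps fun ω => |V ω - W ω| := by
    intro V W hV hW
    have hVW := (hV.sub hW).abs
    rw [sub_le_iff_le_add']
    calc sublinE Ps V ≤ sublinE Ps fun ω => W ω + |V ω - W ω| :=
          sublinE_mono hPs hV (hW.add hVW) fun ω => by linarith [le_abs_self (V ω - W ω)]
      _ ≤ sublinE Ps W + sublinE Ps fun ω => |V ω - W ω| := sublinE_add_le hPs hW hVW
  refine abs_sub_le_iff.2 ⟨one_sided hX hY, ?_⟩
  simpa only [abs_sub_comm] using one_sided hY hX

theorem abs_sublinE_le_of_forall_abs_le (hPs : Ps.Nonempty)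
    (hprob : ∀ P ∈ Ps, IsProbabilityMeasure P) (hX : EIntegrable Ps X) {C : ℝ}
    (h : ∀ ω, |X ω| ≤ C) : |sublinE Ps X| ≤ C := by
  have hconst := EIntegrable.const hprob
  refine abs_le.2 ⟨?_, ?_⟩
  · rw [← sublinE_const hPs hprob (-C)]
    exact sublinE_mono hPs (hconst _) hX fun ω => (abs_le.1 (h ω)).1
  · rw [← sublinE_const hPs hprob C]
    exact sublinE_mono hPs hX (hconst _) fun ω => (abs_le.1 (h ω)).2

theorem Hbar_zero (hPs : Ps.Nonempty) (hprob : ∀ P ∈ Ps, IsProbabilityMeasure P)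
    (hb : ℝ → Ω → ℝ → ℝ) (t x : ℝ) :
    Hbar Ps hb t x (fun _ => 0) = sublinE Ps fun ω => hb t ω x := by
  simp only [Hbar, sublinE_const hPs hprob, add_zero, sub_zero]

end Sublinear

namespace MeanContinuous

variable {Ω : Type*} [MeasurableSpace Ω] {Ps : Set (Measure Ω)} {T : ℝ} {S : ℝ → Ω → ℝ}

theorem continuousOn_sublinE_abs (hS : MeanContinuous Ps T S) (hPs : Ps.Nonempty) :
    ContinuousOn (fun t => sublinE Ps fun ω => |S t ω|) (Icc 0 T) := by
  intro t ht
  refine tendsto_iff_dist_tendsto_zero.2 <|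
    squeeze_zero' (Eventually.of_forall fun _ => dist_nonneg) ?_ (hS.2 t ht)
  filter_upwards [self_mem_nhdsWithin] with s hs
  have hSs := hS.1 s hs
  have hSt := hS.1 t ht
  calc |(sublinE Ps fun ω => |S s ω|) - (sublinE Ps fun ω => |S t ω|)|
      ≤ sublinE Ps fun ω => |(|S s ω| - |S t ω|)| :=
        abs_sublinE_sub_sublinE_le hPs hSs.abs hSt.abs
    _ ≤ sublinE Ps fun ω => |S s ω - S t ω| :=
        sublinE_mono hPs (hSs.abs.sub hSt.abs).abs (hSs.sub hSt).abs fun ω =>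
          abs_abs_sub_abs_le _ _

theorem bddAbove_image_sublinE_abs (hS : MeanContinuous Ps T S) (hPs : Ps.Nonempty) :
    BddAbove ((fun t => sublinE Ps fun ω => |S t ω|) '' Icc 0 T) :=
  isCompact_Icc.bddAbove_image (hS.continuousOn_sublinE_abs hPs)

end MeanContinuous

/-- A random loss function `h`, increasing and bi-Lipschitz in its real variable with constants
`cl ≤ cu`, and bounded by `C` at `0`: the part of (H_r) that concerns the running loss at one fixed
time. Linear growth is encoded by the bound at `0`, as the Lipschitz bound supplies the rest. -/
structure IsBilipschitzLoss {Ω : Type*} [MeasurableSpace Ω] (cl cu C : ℝ) (h : Ω → ℝ → ℝ) :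
    Prop where
  pos : 0 < cl
  le : cl ≤ cu
  measurable : ∀ y, Measurable fun ω => h ω y
  monotone : ∀ ω, Monotone (h ω)
  abs_zero_le : ∀ ω, |h ω 0| ≤ C
  le_abs_sub : ∀ ω x y, cl * |x - y| ≤ |h ω x - h ω y|
  abs_sub_le : ∀ ω x y, |h ω x - h ω y| ≤ cu * |x - y|

theorem HrAssumption.isBilipschitzLoss {Ω : Type*} [MeasurableSpace Ω] {T cl cu Ch : ℝ}
    {l u : ℝ → ℝ} {hb : ℝ → Ω → ℝ → ℝ} (hHr : HrAssumption T cl cu Ch l u hb) (t : ℝ) :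
    IsBilipschitzLoss cl cu Ch (hb t) := by
  obtain ⟨hcl, hle, -, -, -, -, -, hmeas, -, hmono, hgrowth, hbilip⟩ := hHr
  exact
    { pos := hcl
      le := hle
      measurable := hmeas t
      monotone := fun ω => (hmono t ω).monotone
      abs_zero_le := fun ω => by
        simpa only [abs_zero, add_zero, mul_one] using hgrowth t ω 0
      le_abs_sub := fun ω x y => (hbilip t ω x y).1
      abs_sub_le := fun ω x y => (hbilip t ω x y).2 }

namespace IsBilipschitzLoss

variable {Ω : Type*} [MeasurableSpace Ω] {Ps : Set (Measure Ω)} {cl cu C : ℝ} {h : Ω → ℝ → ℝ}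
  {X Y : Ω → ℝ}

theorem nonneg (hh : IsBilipschitzLoss cl cu C h) : 0 ≤ cu :=
  hh.pos.le.trans hh.le

theorem measurable_comp (hh : IsBilipschitzLoss cl cu C h) (hX : Measurable X) :
    Measurable fun ω => h ω (X ω) := by
  have hcont : ∀ ω, Continuous (h ω) := fun ω =>
    (LipschitzWith.of_dist_le' (hh.abs_sub_le ω)).continuous
  exact (measurable_uncurry_of_continuous_of_measurable (u := fun y ω => h ω y) hcont
    hh.measurable).comp (hX.prodMk measurable_id)

theorem eIntegrable_comp (hh : IsBilipschitzLoss cl cu C h)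
    (hprob : ∀ P ∈ Ps, IsProbabilityMeasure P) (hX : EIntegrable Ps X) :
    EIntegrable Ps fun ω => h ω (X ω) := by
  refine ((EIntegrable.const hprob C).add (hX.abs.const_mul cu)).mono
    (hh.measurable_comp hX.1) fun ω => ?_
  calc |h ω (X ω)| ≤ |h ω 0| + |h ω (X ω) - h ω 0| := by
        linarith [abs_sub_abs_le_abs_sub (h ω (X ω)) (h ω 0)]
    _ ≤ C + cu * |X ω| :=
        add_le_add (hh.abs_zero_le ω) (by simpa only [sub_zero] using hh.abs_sub_le ω (X ω) 0)

theorem eIntegrable_apply (hh : IsBilipschitzLoss cl cu C h)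
    (hprob : ∀ P ∈ Ps, IsProbabilityMeasure P) (x : ℝ) : EIntegrable Ps fun ω => h ω x :=
  hh.eIntegrable_comp hprob (.const hprob x)

theorem abs_sublinE_comp_sub_le (hh : IsBilipschitzLoss cl cu C h) (hPs : Ps.Nonempty)
    (hprob : ∀ P ∈ Ps, IsProbabilityMeasure P) (hX : EIntegrable Ps X) (hY : EIntegrable Ps Y) :
    |(sublinE Ps fun ω => h ω (X ω)) - sublinE Ps fun ω => h ω (Y ω)| ≤
      cu * sublinE Ps fun ω => |X ω - Y ω| := by
  have hhX := hh.eIntegrable_comp hprob hX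
  have hhY := hh.eIntegrable_comp hprob hY
  calc |(sublinE Ps fun ω => h ω (X ω)) - sublinE Ps fun ω => h ω (Y ω)|
      ≤ sublinE Ps fun ω => |h ω (X ω) - h ω (Y ω)| := abs_sublinE_sub_sublinE_le hPs hhX hhY
    _ ≤ sublinE Ps fun ω => cu * |X ω - Y ω| :=
        sublinE_mono hPs (hhX.sub hhY).abs ((hX.sub hY).abs.const_mul cu) fun ω =>
          hh.abs_sub_le ω _ _
    _ = cu * sublinE Ps fun ω => |X ω - Y ω| := sublinE_const_mul hh.nonneg _

theorem apply_add_mul_sub_le (hh : IsBilipschitzLoss cl cu C h) (ω : Ω) {x y : ℝ} (hxy : x ≤ y) :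
    h ω x + cl * (y - x) ≤ h ω y := by
  have hslope := hh.le_abs_sub ω y x
  rw [abs_of_nonneg (sub_nonneg.2 hxy), abs_of_nonneg (sub_nonneg.2 (hh.monotone ω hxy))] at hslope
  linarith

theorem sublinE_add_mul_sub_le (hh : IsBilipschitzLoss cl cu C h) (hPs : Ps.Nonempty)
    (hprob : ∀ P ∈ Ps, IsProbabilityMeasure P) {x y : ℝ} (hxy : x ≤ y) :
    (sublinE Ps fun ω => h ω x) + cl * (y - x) ≤ sublinE Ps fun ω => h ω y := by
  have hx := hh.eIntegrable_apply hprob x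
  rw [← sublinE_add_const hPs hprob hx]
  exact sublinE_mono hPs (hx.add (.const hprob _)) (hh.eIntegrable_apply hprob y) fun ω =>
    hh.apply_add_mul_sub_le ω hxy

theorem le_add_div_of_sublinE_le_add (hh : IsBilipschitzLoss cl cu C h) (hPs : Ps.Nonempty)
    (hprob : ∀ P ∈ Ps, IsProbabilityMeasure P) {x y δ : ℝ} (hδ : 0 ≤ δ)
    (hle : (sublinE Ps fun ω => h ω x) ≤ (sublinE Ps fun ω => h ω y) + δ) : x ≤ y + δ / cl := by
  rcases le_total x y with hxy | hyx
  · exact hxy.trans (le_add_of_nonneg_right (div_nonneg hδ hh.pos.le))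
  · rw [← sub_le_iff_le_add', le_div_iff₀' hh.pos]
    linarith [hh.sublinE_add_mul_sub_le hPs hprob hyx]

theorem abs_le_of_abs_sublinE_le (hh : IsBilipschitzLoss cl cu C h) (hPs : Ps.Nonempty)
    (hprob : ∀ P ∈ Ps, IsProbabilityMeasure P) {x M : ℝ}
    (hM : |sublinE Ps fun ω => h ω x| ≤ M) : |x| ≤ (M + C) / cl := by
  have hzero := abs_sublinE_le_of_forall_abs_le hPs hprob (hh.eIntegrable_apply hprob 0)
    hh.abs_zero_le
  have hδ : 0 ≤ M + C := add_nonneg ((abs_nonneg _).trans hM) ((abs_nonneg _).trans hzero)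
  rw [abs_le] at hM hzero
  have hupper : x ≤ 0 + (M + C) / cl := hh.le_add_div_of_sublinE_le_add hPs hprob hδ (by linarith)
  have hlower : 0 ≤ x + (M + C) / cl := hh.le_add_div_of_sublinE_le_add hPs hprob hδ (by linarith)
  exact abs_le.2 ⟨by linarith, by linarith⟩

theorem abs_le_of_sublinE_comp_add_mem_Icc (hh : IsBilipschitzLoss cl cu C h) (hPs : Ps.Nonempty)
    (hprob : ∀ P ∈ Ps, IsProbabilityMeasure P) (hX : EIntegrable Ps X) {a p q : ℝ}
    (hmem : (sublinE Ps fun ω => h ω (X ω + a)) ∈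
      Icc (sublinE Ps fun ω => h ω p) (sublinE Ps fun ω => h ω q)) :
    |a| ≤ cu / cl * (sublinE Ps fun ω => |X ω|) + max |p| |q| := by
  have ha := EIntegrable.const hprob a
  have hshift := hh.abs_sublinE_comp_sub_le hPs hprob (hX.add ha) ha
  simp only [add_sub_cancel_right, abs_le] at hshift
  have hδ : 0 ≤ cu * sublinE Ps fun ω => |X ω| :=
    mul_nonneg hh.nonneg (sublinE_nonneg fun ω => abs_nonneg _)
  have hupper : a ≤ q + cu * (sublinE Ps fun ω => |X ω|) / cl :=
    hh.le_add_div_of_sublinE_le_add hPs hprob hδ (by linarith [hmem.2])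
  have hlower : p ≤ a + cu * (sublinE Ps fun ω => |X ω|) / cl :=
    hh.le_add_div_of_sublinE_le_add hPs hprob hδ (by linarith [hmem.1])
  rw [div_mul_eq_mul_div, abs_le]
  constructor
  · linarith [neg_abs_le p, le_max_left |p| |q|]
  · linarith [le_abs_self q, le_max_right |p| |q|]

end IsBilipschitzLoss

section AprioriBound

variable {Ω : Type*} [MeasurableSpace Ω] {Ps : Set (Measure Ω)} {T cl cu C : ℝ} {l u : ℝ → ℝ}
  {hb : ℝ → Ω → ℝ → ℝ} {L₀ U₀ : ℝ → ℝ}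

theorem bddAbove_image_max_abs_of_Hbar_eq (hPs : Ps.Nonempty)
    (hprob : ∀ P ∈ Ps, IsProbabilityMeasure P)
    (hloss : ∀ t ∈ Icc (0 : ℝ) T, IsBilipschitzLoss cl cu C (hb t))
    (hbarrier : ∃ M : ℝ, ∀ t ∈ Icc (0 : ℝ) T, |l t| ≤ M ∧ |u t| ≤ M)
    (hL : ∀ t ∈ Icc (0 : ℝ) T, Hbar Ps hb t (L₀ t) (fun _ => 0) = l t)
    (hU : ∀ t ∈ Icc (0 : ℝ) T, Hbar Ps hb t (U₀ t) (fun _ => 0) = u t) :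
    BddAbove ((fun t => max |L₀ t| |U₀ t|) '' Icc 0 T) := by
  simp only [Hbar_zero hPs hprob] at hL hU
  obtain ⟨M, hM⟩ := hbarrier
  refine ⟨(M + C) / cl, forall_mem_image.2 fun t ht => max_le ?_ ?_⟩
  · exact (hloss t ht).abs_le_of_abs_sublinE_le hPs hprob ((hL t ht).symm ▸ (hM t ht).1)
  · exact (hloss t ht).abs_le_of_abs_sublinE_le hPs hprob ((hU t ht).symm ▸ (hM t ht).2)

theorem stmt11_general (hPs : Ps.Nonempty) (hprob : ∀ P ∈ Ps, IsProbabilityMeasure P)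
    (hloss : ∀ t ∈ Icc (0 : ℝ) T, IsBilipschitzLoss cl cu C (hb t))
    (hbarrier : ∃ M : ℝ, ∀ t ∈ Icc (0 : ℝ) T, |l t| ≤ M ∧ |u t| ≤ M)
    (hL : ∀ t ∈ Icc (0 : ℝ) T, Hbar Ps hb t (L₀ t) (fun _ => 0) = l t)
    (hU : ∀ t ∈ Icc (0 : ℝ) T, Hbar Ps hb t (U₀ t) (fun _ => 0) = u t)
    {Ybar Y : ℝ → Ω → ℝ} {R : ℝ → ℝ} (hYbar : ∀ t ∈ Icc (0 : ℝ) T, EIntegrable Ps (Ybar t))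
    (hbdd : BddAbove ((fun t => sublinE Ps fun ω => |Ybar t ω|) '' Icc 0 T))
    (hY : ∀ t ∈ Icc (0 : ℝ) T, ∀ ω, Y t ω = Ybar t ω + R T - R t)
    (hconstraint : ∀ t ∈ Icc (0 : ℝ) T, l t ≤ sublinE Ps (fun ω => hb t ω (Y t ω)) ∧
      sublinE Ps (fun ω => hb t ω (Y t ω)) ≤ u t)
    {t : ℝ} (ht : t ∈ Icc 0 T) :
    |R T - R t| ≤
      cu / cl * sSup ((fun s => sublinE Ps fun ω => |Ybar s ω|) '' Icc t T) +
        sSup ((fun s => max |L₀ s| |U₀ s|) '' Icc t T) := by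
  have hbarrier_bdd := bddAbove_image_max_abs_of_Hbar_eq hPs hprob hloss hbarrier hL hU
  have hmem := hconstraint t ht
  simp only [hY t ht, add_sub_assoc, ← hL t ht, ← hU t ht, Hbar_zero hPs hprob] at hmem
  have htT : t ∈ Icc t T := left_mem_Icc.2 ht.2
  have hsub : Icc t T ⊆ Icc 0 T := Icc_subset_Icc_left ht.1
  calc |R T - R t|
      ≤ cu / cl * (sublinE Ps fun ω => |Ybar t ω|) + max |L₀ t| |U₀ t| :=
        (hloss t ht).abs_le_of_sublinE_comp_add_mem_Icc hPs hprob (hYbar t ht) hmem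
    _ ≤ _ := add_le_add
        (mul_le_mul_of_nonneg_left
          (le_csSup (hbdd.mono (image_mono hsub)) (mem_image_of_mem _ htT))
          (div_nonneg (hloss t ht).nonneg (hloss t ht).pos.le))
        (le_csSup (hbarrier_bdd.mono (image_mono hsub)) (mem_image_of_mem _ htT))

end AprioriBound

/-- a priori bound for the reflecting term of the backward Skorokhod problem
with sublinear expectation:
`|R_T − R_t| ≤ (1 + 2c̄/c̲) sup_{s∈[t,T]} Ê[|Ȳ_s|] + sup_{s∈[t,T]} max(|L_s(0)|, |U_s(0)|)`. -/
theorem stmt11 {Ω : Type*} [MeasurableSpace Ω] (T cl cu Ch : ℝ) (hT : 0 < T)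
    (Ps : Set (Measure Ω)) (hPs : Ps.Nonempty) (hprob : ∀ P ∈ Ps, IsProbabilityMeasure P)
    (l u : ℝ → ℝ) (hb : ℝ → Ω → ℝ → ℝ) (hHr : HrAssumption T cl cu Ch l u hb)
    (L U : ℝ → (Ω → ℝ) → ℝ)
    (hL : ∀ t ∈ Icc (0:ℝ) T, ∀ X : Ω → ℝ, EIntegrable Ps X → Hbar Ps hb t (L t X) X = l t)
    (hU : ∀ t ∈ Icc (0:ℝ) T, ∀ X : Ω → ℝ, EIntegrable Ps X → Hbar Ps hb t (U t X) X = u t)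
    (Ybar : ℝ → Ω → ℝ) (hYbar : MeanContinuous Ps T Ybar)
    (htermL : l T ≤ sublinE Ps fun ω => hb T ω (Ybar T ω))
    (htermU : (sublinE Ps fun ω => hb T ω (Ybar T ω)) ≤ u T)
    (Y : ℝ → Ω → ℝ) (R : ℝ → ℝ) (hsol : IsBSPsol Ps T hb l u Ybar Y R) :
    ∀ t ∈ Icc (0:ℝ) T,
      |R T - R t| ≤
        (1 + 2 * cu / cl) * sSup ((fun s => sublinE Ps fun ω => |Ybar s ω|) '' Icc t T) +
          sSup ((fun s => max |L s (fun _ => 0)| |U s (fun _ => 0)|) '' Icc t T) := by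
  intro t ht
  have hloss := hHr.isBilipschitzLoss
  have hzero := EIntegrable.const hprob 0
  obtain ⟨-, -, -, -, -, hbarrier, -⟩ := hHr
  have hratio : 0 ≤ cu / cl := div_nonneg (hloss t).nonneg (hloss t).pos.le
  refine (stmt11_general hPs hprob (fun s _ => hloss s) hbarrier
    (fun s hs => hL s hs _ hzero) (fun s hs => hU s hs _ hzero) hYbar.1
    (hYbar.bddAbove_image_sublinE_abs hPs) hsol.1 hsol.2.1 ht).trans ?_
  gcongr ?_ * _ + _
  · exact Real.sSup_nonneg (forall_mem_image.2 fun s _ => sublinE_nonneg fun ω => abs_nonneg _)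
  · linarith [mul_div_assoc 2 cu cl]
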